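/- arXiv:1308.2594 — 5 statements merged into one kernel-verified Lean document; each statement's English description precedes it below -/
import Mathlib

section
/- Let ω₀ ∈ ℂ with Re ω₀ > 0 and Im ω₀ > 0, and let m ∈ ℝ with m ≠ 0 and 1 + m > 0. Then there exists δ₀ > 0 such that for every δ ∈ (0, δ₀], every z ∈ ℂ that does not lie on the real ray [(Im ω₀ + δ)², ∞) (i.e. it is not the case that Im z = 0 and Re z ≥ (Im ω₀ + δ)²), and every s ∈ ℝ, there is no ξ ∈ ℂ with Im ξ > 0 satisfying simultaneously (ξ² + s − ω̄₀)·(ξ² + s − ω₀) = z and (ξ² + s − (1+m)·ω̄₀)·(ξ² + s − (1+m)·ω₀) = (1+m)²·z. (This is Lemma 3 of the paper: the roots λ_{j,+} and μ_{k,+} in the upper half plane are always distinct.) -/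
/-!
Put `w = ξ² + s`, `k = 1 + m`, `a = Re ω₀` and `b = Im ω₀`. Both equations depend on `ξ` and `s`
only through `w`, and eliminating `z` leaves `(1 - k) w ((1 + k) w - 2 a k) = 0`. Hence `w - a` is
`-a` or, when `m ≠ -2`, possibly `a m / (2 + m)`; both are real numbers of absolute value at least
`c = |a m| / (2 + |m|) > 0`. As `z = (w - a)² + b²`, it is real and at least `b² + c²`, so it lies
on the excluded ray as soon as `(b + δ)² ≤ b² + c²`.
-/

open scoped Topology ComplexConjugate

theorem sub_mul_mul_sub_mul_eq_iff {R : Type*} [CommRing R] [NoZeroDivisors R] {k : R}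
    (hk : k ≠ 1) (α β w : R) :
    (w - k * α) * (w - k * β) = k ^ 2 * ((w - α) * (w - β)) ↔
      w = 0 ∨ (1 + k) * w = k * (α + β) := by
  have factored : (w - k * α) * (w - k * β) - k ^ 2 * ((w - α) * (w - β)) =
      (1 - k) * (w * ((1 + k) * w - k * (α + β))) := by ring
  rw [← sub_eq_zero, factored, mul_eq_zero_iff_left (sub_ne_zero.2 hk.symm), mul_eq_zero,
    sub_eq_zero]

theorem sub_conj_mul_sub_eq_sq_add_sq (w ω : ℂ) :
    (w - conj ω) * (w - ω) = (w - ω.re) ^ 2 + ω.im ^ 2 := by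
  calc (w - conj ω) * (w - ω) = w ^ 2 - (ω + conj ω) * w + ω * conj ω := by ring
    _ = (w - ω.re) ^ 2 + ω.im ^ 2 := by
      rw [Complex.add_conj, Complex.mul_conj, Complex.normSq_apply]
      push_cast
      ring

theorem abs_mul_div_two_add_abs_le {a m x : ℝ} (h : x = -a ∨ (2 + m) * x = a * m) :
    |a * m| / (2 + |m|) ≤ |x| := by
  rw [div_le_iff₀ (by positivity)]
  rcases h with rfl | h
  · rw [abs_mul, abs_neg]
    gcongr
    linarith
  · calc |a * m| = |x| * |2 + m| := by rw [← h, abs_mul, mul_comm]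
      _ ≤ |x| * (2 + |m|) := by
        gcongr
        simpa only [abs_two] using abs_add_le 2 m

theorem exists_eq_re_add_ofReal {ω w : ℂ} {m : ℝ} (hω : ω.re ≠ 0) (hm : m ≠ 0)
    (h : (w - (1 + m) * conj ω) * (w - (1 + m) * ω) =
      (1 + m) ^ 2 * ((w - conj ω) * (w - ω))) :
    ∃ x : ℝ, w = ω.re + x ∧ (x = -ω.re ∨ (2 + m) * x = ω.re * m) := by
  have hk : (1 + m : ℂ) ≠ 1 := by simpa using hm
  rcases (sub_mul_mul_sub_mul_eq_iff hk _ _ _).1 h with rfl | hw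
  · exact ⟨-ω.re, by simp, .inl rfl⟩
  · have shifted : (2 + m : ℂ) * (w - ω.re) = ω.re * m := by
      rw [add_comm (conj ω), Complex.add_conj] at hw
      push_cast at hw
      linear_combination hw
    have h2m : (2 + m : ℂ) ≠ 0 := by
      refine left_ne_zero_of_mul (b := w - ω.re) ?_
      rw [shifted]
      exact_mod_cast mul_ne_zero hω hm
    refine ⟨ω.re * m / (2 + m), ?_, .inr (mul_div_cancel₀ _ (by exact_mod_cast h2m))⟩
    push_cast
    rw [← shifted, mul_div_cancel_left₀ _ h2m, add_sub_cancel]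

theorem exists_pos_forall_abs_le_add_sq_le (b : ℝ) {ε : ℝ} (hε : 0 < ε) :
    ∃ δ₀ > 0, ∀ δ : ℝ, |δ| ≤ δ₀ → (b + δ) ^ 2 ≤ b ^ 2 + ε := by
  have hcont : ContinuousAt (fun δ : ℝ ↦ (b + δ) ^ 2) 0 := by fun_prop
  have near : ∀ᶠ δ in 𝓝 (0 : ℝ), (b + δ) ^ 2 < b ^ 2 + ε :=
    hcont.eventually_lt_const (by simpa using hε)
  obtain ⟨δ₀, hδ₀, hball⟩ := Metric.nhds_basis_closedBall.eventually_iff.1 near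
  exact ⟨δ₀, hδ₀, fun δ hδ ↦ (hball (mem_closedBall_zero_iff.2 hδ)).le⟩

theorem roots_distinct_general {ω₀ : ℂ} {m : ℝ} (hω : ω₀.re ≠ 0) (hm : m ≠ 0) :
    ∃ δ₀ > 0, ∀ δ : ℝ, |δ| ≤ δ₀ →
      ∀ z : ℂ, ¬(z.im = 0 ∧ (ω₀.im + δ) ^ 2 ≤ z.re) →
        ∀ w : ℂ, ¬((w - conj ω₀) * (w - ω₀) = z ∧
          (w - (1 + m) * conj ω₀) * (w - (1 + m) * ω₀) = (1 + m) ^ 2 * z) := by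
  obtain ⟨δ₀, hδ₀, hclose⟩ := exists_pos_forall_abs_le_add_sq_le ω₀.im
    (ε := (|ω₀.re * m| / (2 + |m|)) ^ 2) (by positivity)
  refine ⟨δ₀, hδ₀, ?_⟩
  rintro δ hδ _ hz w ⟨rfl, hμ⟩
  obtain ⟨x, rfl, hx⟩ := exists_eq_re_add_ofReal hω hm hμ
  have gap : (|ω₀.re * m| / (2 + |m|)) ^ 2 ≤ x ^ 2 :=
    sq_le_sq.2 ((abs_of_nonneg (by positivity)).trans_le (abs_mul_div_two_add_abs_le hx))
  have real_value : (ω₀.re + x - conj ω₀) * (ω₀.re + x - ω₀) = ((x ^ 2 + ω₀.im ^ 2 : ℝ) : ℂ) := by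
    rw [sub_conj_mul_sub_eq_sq_add_sq, add_sub_cancel_left]
    push_cast
    rfl
  rw [real_value, Complex.ofReal_im, Complex.ofReal_re] at hz
  exact hz ⟨rfl, by linarith [hclose δ hδ]⟩

/-- Lemma 3 of the paper: the upper-half-plane roots `λ_{j,+}` of (2.10*) and
`μ_{k,+}` of (2.11*) are always distinct, i.e. no `ξ` with `Im ξ > 0` solves
both characteristic equations simultaneously. -/
theorem roots_distinct
    (ω₀ : ℂ) (m : ℝ)
    (hωre : 0 < ω₀.re) (hωim : 0 < ω₀.im) (hm0 : m ≠ 0) (hm1 : 0 < 1 + m) :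
    ∃ δ₀ > 0, ∀ δ : ℝ, 0 < δ → δ ≤ δ₀ →
      ∀ z : ℂ, ¬(z.im = 0 ∧ (ω₀.im + δ) ^ 2 ≤ z.re) →
        ∀ s : ℝ, ¬∃ ξ : ℂ, 0 < ξ.im ∧
          (ξ ^ 2 + (s : ℂ) - (starRingEnd ℂ) ω₀) * (ξ ^ 2 + (s : ℂ) - ω₀) = z ∧
          (ξ ^ 2 + (s : ℂ) - (1 + (m : ℂ)) * (starRingEnd ℂ) ω₀) *
            (ξ ^ 2 + (s : ℂ) - (1 + (m : ℂ)) * ω₀) = (1 + (m : ℂ)) ^ 2 * z := by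
  obtain ⟨δ₀, hδ₀, h⟩ := roots_distinct_general hωre.ne' hm0
  exact ⟨δ₀, hδ₀, fun δ hδ hle z hz s ⟨_, _, hroots⟩ ↦
    h δ ((abs_of_pos hδ).trans_le hle) z hz _ hroots⟩
end

section
/- Let ω₀ ∈ ℂ with Re ω₀ ≠ 0, let m ∈ ℝ with m ≠ 0 and m ≠ −2, and let z, p ∈ ℂ. If (p − ω̄₀)·(p − ω₀) = z and (p − (1+m)·ω̄₀)·(p − (1+m)·ω₀) = (1+m)²·z, then either z = |ω₀|² or z = (Im ω₀)² + (m²/(2+m)²)·(Re ω₀)² (in both cases z equals the indicated real number, viewed as a complex number). (This is the algebraic core of the proof of Lemma 3.) -/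
/-!
Put `c = 1 + m`. Subtracting the second equation from `c²` times the first eliminates `z` together
with the product of the two roots and leaves `(c - 1) p ((c + 1) p - c (ω₀ + ω̄₀)) = 0`. As `c ≠ 1`,
either `p = 0`, so that `z = |ω₀|²`, or `p = c (ω₀ + ω̄₀) / (c + 1)`, in which case `p - ω₀` and
`p - ω̄₀` are the conjugate numbers `(c ω̄₀ - ω₀) / (c + 1)` and `(c ω₀ - ω̄₀) / (c + 1)`, so that
`z = |c ω₀ - ω̄₀|² / (c + 1)²`.
-/

open scoped ComplexConjugate

theorem eq_zero_or_add_one_mul_eq_of_scaled_roots {R : Type*} [CommRing R] [NoZeroDivisors R]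
    {c u v p z : R} (hc : c ≠ 1) (h : (p - u) * (p - v) = z)
    (hscaled : (p - c * u) * (p - c * v) = c ^ 2 * z) :
    p = 0 ∨ (c + 1) * p = c * (u + v) := by
  have hfactor : (c - 1) * (p * ((c + 1) * p - c * (u + v))) = 0 := by
    linear_combination c ^ 2 * h - hscaled
  have hprod : p * ((c + 1) * p - c * (u + v)) = 0 :=
    (mul_eq_zero.mp hfactor).resolve_left (sub_ne_zero.mpr hc)
  exact (mul_eq_zero.mp hprod).imp_right sub_eq_zero.mp

theorem eq_mul_or_eq_div_of_scaled_roots {K : Type*} [Field K] {c u v p z : K}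
    (hc : c ≠ 1) (hc' : c + 1 ≠ 0) (h : (p - u) * (p - v) = z)
    (hscaled : (p - c * u) * (p - c * v) = c ^ 2 * z) :
    z = u * v ∨ z = (c * v - u) * (c * u - v) / (c + 1) ^ 2 := by
  refine (eq_zero_or_add_one_mul_eq_of_scaled_roots hc h hscaled).imp (fun hp ↦ ?_) (fun hp ↦ ?_)
  · rw [← h, hp]
    ring
  · have hu : p - u = (c * v - u) / (c + 1) := by
      rw [eq_div_iff hc']
      linear_combination hp
    have hv : p - v = (c * u - v) / (c + 1) := by
      rw [eq_div_iff hc']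
      linear_combination hp
    rw [← h, hu, hv, div_mul_div_comm, sq]

theorem eq_normSq_or_eq_normSq_div_of_scaled_conj_roots {c : ℝ} {w p z : ℂ}
    (hc : c ≠ 1) (hc' : c + 1 ≠ 0) (h : (p - conj w) * (p - w) = z)
    (hscaled : (p - c * conj w) * (p - c * w) = (c : ℂ) ^ 2 * z) :
    z = (Complex.normSq w : ℂ) ∨
      z = ((Complex.normSq (c * w - conj w) / (c + 1) ^ 2 : ℝ) : ℂ) := by
  have hroots := eq_mul_or_eq_div_of_scaled_roots (by exact_mod_cast hc) (by exact_mod_cast hc')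
    h hscaled
  refine hroots.imp (fun hz ↦ ?_) (fun hz ↦ ?_)
  · rw [hz, Complex.normSq_eq_conj_mul_self]
  · rw [hz]
    push_cast
    rw [← Complex.mul_conj, map_sub, map_mul, Complex.conj_ofReal, Complex.conj_conj]

theorem normSq_ofReal_mul_sub_conj (c : ℝ) (w : ℂ) :
    Complex.normSq (c * w - conj w) = (c - 1) ^ 2 * w.re ^ 2 + (c + 1) ^ 2 * w.im ^ 2 := by
  simp only [Complex.normSq_apply, Complex.sub_re, Complex.sub_im, Complex.re_ofReal_mul,
    Complex.im_ofReal_mul, Complex.conj_re, Complex.conj_im]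
  ring

/-- The algebraic core of the proof of Lemma 3 of the paper: if `p` solves both
characteristic equations, then `z = |ω₀|²` or
`z = (Im ω₀)² + (m²/(2+m)²)·(Re ω₀)²`. -/
theorem algebraic_core_lemma3
    (ω₀ : ℂ) (m : ℝ) (z p : ℂ)
    (hωre : ω₀.re ≠ 0) (hm0 : m ≠ 0) (hm2 : m ≠ -2)
    (h1 : (p - (starRingEnd ℂ) ω₀) * (p - ω₀) = z)
    (h2 : (p - (1 + (m : ℂ)) * (starRingEnd ℂ) ω₀) * (p - (1 + (m : ℂ)) * ω₀) =
      (1 + (m : ℂ)) ^ 2 * z) :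
    z = ((ω₀.re ^ 2 + ω₀.im ^ 2 : ℝ) : ℂ) ∨
      z = ((ω₀.im ^ 2 + (m ^ 2 / (2 + m) ^ 2) * ω₀.re ^ 2 : ℝ) : ℂ) := by
  have hm : 2 + m ≠ 0 := fun h ↦ hm2 (by linarith)
  have hnormSq : Complex.normSq ω₀ = ω₀.re ^ 2 + ω₀.im ^ 2 := by
    rw [Complex.normSq_apply, sq, sq]
  have hquotient : Complex.normSq ((1 + m : ℝ) * ω₀ - conj ω₀) / (1 + m + 1) ^ 2 =
      ω₀.im ^ 2 + m ^ 2 / (2 + m) ^ 2 * ω₀.re ^ 2 := by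
    rw [normSq_ofReal_mul_sub_conj, show 1 + m + 1 = 2 + m by ring, add_sub_cancel_left]
    field_simp
    ring
  rw [← hnormSq, ← hquotient]
  exact eq_normSq_or_eq_normSq_div_of_scaled_conj_roots (c := 1 + m) (by simpa using hm0)
    (fun h ↦ hm (by linarith)) h1 (by exact_mod_cast h2)
end

section
/- For all complex numbers λ₁, λ₂, μ₁, μ₂, Y, m, the determinant of the 4×4 complex matrix Λ with rows (1, 1, −1, −1), (λ₁, λ₂, −μ₁, −μ₂), (−(1+m)²λ₁² + Y, −(1+m)²λ₂² + Y, −μ₁², −μ₂²), (−(1+m)²λ₁³ + λ₁Y, −(1+m)²λ₂³ + λ₂Y, −μ₁³, −μ₂³) equals −(λ₂ − λ₁)·(μ₂ − μ₁)·D(λ₁, λ₂, μ₁, μ₂, Y, m). (These are the matrix Λ and the determinant factorization det Λ = −(λ₂−λ₁)(μ₂−μ₁)·det Λ₁ computed in Section 2 of the paper.) -/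
/-- The paper's expression for `det Λ₁`. -/
def Ddet (l₁ l₂ mu₁ mu₂ Y m : ℂ) : ℂ :=
  (1 + m) ^ 2 * (mu₁ * mu₂ * (l₁ + l₂) ^ 2
      - (l₁ * l₂ + mu₁ * mu₂) * (mu₁ + mu₂) * (l₁ + l₂)
      + l₁ * l₂ * (mu₁ + mu₂) ^ 2)
    - ((1 + m) ^ 2 * l₁ * l₂ + mu₁ * mu₂) ^ 2
    + ((1 + m) ^ 2 * (l₁ ^ 2 + l₂ ^ 2) + mu₁ ^ 2 + mu₂ ^ 2) * Y - Y ^ 2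

/-!
Up to the signs of its last two columns, `Λ` has columns `(1, x, y, x * y)` for four points
`(x, y)`. Translating all the points acts by unipotent row operations, so it does not change the
determinant; moving the first point to the origin leaves a `3 × 3` determinant, which equals
`(x₁ - x₀) (x₃ - x₂) (y₀ - y₃) (y₁ - y₂) - (x₃ - x₀) (x₂ - x₁) (y₁ - y₀) (y₃ - y₂)`.
For `Λ` the first two points lie on the parabola `y = Y - (1 + m) ^ 2 * x ^ 2` and the last two on
`y = x ^ 2`, so `y₁ - y₀` and `y₃ - y₂` are divisible by `x₁ - x₀` and `x₃ - x₂`, and both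
factors come out of the whole expression.
-/

section BilinearVandermonde

variable {R ι : Type*} [CommRing R]

/-- The matrix evaluating the monomials `1, S, T, S * T` (rows) at the points `(x i, y i)`
(columns), the Vandermonde matrix for bilinear interpolation. -/
def bilinearVandermonde (x y : ι → R) : Matrix (Fin 4) ι R :=
  Matrix.of ![1, x, y, x * y]

/-- The matrix of the substitution `S ↦ S - a`, `T ↦ T - b` on the monomials `1, S, T, S * T`;
row `i` lists the coefficients of the image of the `i`-th monomial. -/
def bilinearTranslation (a b : R) : Matrix (Fin 4) (Fin 4) R :=
  !![1, 0, 0, 0;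
    -a, 1, 0, 0;
    -b, 0, 1, 0;
    a * b, -b, -a, 1]

lemma det_bilinearTranslation (a b : R) : (bilinearTranslation a b).det = 1 := by
  have lower : (bilinearTranslation a b).IsLowerTriangular := by
    intro i j hij
    fin_cases i <;> fin_cases j <;> first | rfl | exact absurd hij (by decide)
  rw [Matrix.det_of_isLowerTriangular _ lower, Fin.prod_univ_four]
  simp [bilinearTranslation]

lemma bilinearTranslation_mul_bilinearVandermonde (a b : R) (x y : ι → R) :
    bilinearTranslation a b * bilinearVandermonde x y =
      bilinearVandermonde (fun i ↦ x i - a) (fun i ↦ y i - b) := by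
  ext i j
  fin_cases i <;>
    simp [bilinearTranslation, bilinearVandermonde, Matrix.mul_apply, Fin.sum_univ_four] <;> ring

lemma det_bilinearVandermonde_sub_const (a b : R) (x y : Fin 4 → R) :
    (bilinearVandermonde (fun i ↦ x i - a) (fun i ↦ y i - b)).det =
      (bilinearVandermonde x y).det := by
  rw [← bilinearTranslation_mul_bilinearVandermonde, Matrix.det_mul, det_bilinearTranslation,
    one_mul]

lemma det_bilinearVandermonde_of_zero {x y : Fin 4 → R} (hx : x 0 = 0) (hy : y 0 = 0) :
    (bilinearVandermonde x y).det =
      (Matrix.of ![Fin.tail x, Fin.tail y, Fin.tail x * Fin.tail y]).det := by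
  have submatrix_eq : (bilinearVandermonde x y).submatrix Fin.succ Fin.succ =
      Matrix.of ![Fin.tail x, Fin.tail y, Fin.tail x * Fin.tail y] := by
    ext i j
    fin_cases i <;> rfl
  rw [Matrix.det_succ_column_zero, Fin.sum_univ_four]
  simp [bilinearVandermonde, hx, hy, ← submatrix_eq]

theorem det_bilinearVandermonde (x y : Fin 4 → R) :
    (bilinearVandermonde x y).det =
      (x 1 - x 0) * (x 3 - x 2) * ((y 0 - y 3) * (y 1 - y 2)) -
        (x 3 - x 0) * (x 2 - x 1) * ((y 1 - y 0) * (y 3 - y 2)) := by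
  rw [← det_bilinearVandermonde_sub_const (x 0) (y 0),
    det_bilinearVandermonde_of_zero (sub_self _) (sub_self _), Matrix.det_fin_three]
  simp only [Matrix.of_apply, Matrix.cons_val, Fin.tail, Fin.reduceSucc, Pi.mul_apply]
  ring

theorem det_bilinearVandermonde_of_sub_eq_mul {x y : Fin 4 → R} {u v : R}
    (hu : y 1 - y 0 = (x 1 - x 0) * u) (hv : y 3 - y 2 = (x 3 - x 2) * v) :
    (bilinearVandermonde x y).det =
      (x 1 - x 0) * (x 3 - x 2) *
        ((y 0 - y 3) * (y 1 - y 2) - (x 3 - x 0) * (x 2 - x 1) * (u * v)) := by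
  rw [det_bilinearVandermonde, hu, hv]
  ring

end BilinearVandermonde

theorem det_Lambda_factorization_general {R : Type*} [CommRing R] (c l₁ l₂ mu₁ mu₂ Y : R) :
    (Matrix.of
      ![![1, 1, -1, -1],
        ![l₁, l₂, -mu₁, -mu₂],
        ![-c * l₁ ^ 2 + Y, -c * l₂ ^ 2 + Y, -mu₁ ^ 2, -mu₂ ^ 2],
        ![-c * l₁ ^ 3 + l₁ * Y, -c * l₂ ^ 3 + l₂ * Y, -mu₁ ^ 3, -mu₂ ^ 3]]).det
    = -(l₂ - l₁) * (mu₂ - mu₁) *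
      (c * (mu₁ * mu₂ * (l₁ + l₂) ^ 2
          - (l₁ * l₂ + mu₁ * mu₂) * (mu₁ + mu₂) * (l₁ + l₂)
          + l₁ * l₂ * (mu₁ + mu₂) ^ 2)
        - (c * l₁ * l₂ + mu₁ * mu₂) ^ 2
        + (c * (l₁ ^ 2 + l₂ ^ 2) + mu₁ ^ 2 + mu₂ ^ 2) * Y - Y ^ 2) := by
  let x : Fin 4 → R := ![l₁, l₂, mu₁, mu₂]
  let y : Fin 4 → R := ![-c * l₁ ^ 2 + Y, -c * l₂ ^ 2 + Y, mu₁ ^ 2, mu₂ ^ 2]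
  have det_signs : (Matrix.diagonal ![1, 1, -1, -1] : Matrix (Fin 4) (Fin 4) R).det = 1 := by
    simp [Matrix.det_diagonal, Fin.prod_univ_four]
  have slope_l : y 1 - y 0 = (x 1 - x 0) * (-c * (l₁ + l₂)) := by
    change -c * l₂ ^ 2 + Y - (-c * l₁ ^ 2 + Y) = (l₂ - l₁) * (-c * (l₁ + l₂))
    ring
  have slope_mu : y 3 - y 2 = (x 3 - x 2) * (mu₁ + mu₂) := by
    change mu₂ ^ 2 - mu₁ ^ 2 = (mu₂ - mu₁) * (mu₁ + mu₂)
    ring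
  calc
    _ = (bilinearVandermonde x y * Matrix.diagonal ![1, 1, -1, -1]).det := by
      congr 1
      ext i j
      fin_cases i <;> fin_cases j <;> simp [bilinearVandermonde, x, y] <;> ring
    _ = (x 1 - x 0) * (x 3 - x 2) * ((y 0 - y 3) * (y 1 - y 2)
          - (x 3 - x 0) * (x 2 - x 1) * (-c * (l₁ + l₂) * (mu₁ + mu₂))) := by
      rw [Matrix.det_mul, det_signs, mul_one,
        det_bilinearVandermonde_of_sub_eq_mul slope_l slope_mu]
    _ = (l₂ - l₁) * (mu₂ - mu₁) * ((-c * l₁ ^ 2 + Y - mu₂ ^ 2) * (-c * l₂ ^ 2 + Y - mu₁ ^ 2)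
          - (mu₂ - l₁) * (mu₁ - l₂) * (-c * (l₁ + l₂) * (mu₁ + mu₂))) := rfl
    _ = _ := by ring

/-- The determinant factorization `det Λ = −(λ₂−λ₁)(μ₂−μ₁)·det Λ₁`
computed in Section 2 of the paper. -/
theorem det_Lambda_factorization (l₁ l₂ mu₁ mu₂ Y m : ℂ) :
    (Matrix.of
      ![![1, 1, -1, -1],
        ![l₁, l₂, -mu₁, -mu₂],
        ![-(1 + m) ^ 2 * l₁ ^ 2 + Y, -(1 + m) ^ 2 * l₂ ^ 2 + Y, -mu₁ ^ 2, -mu₂ ^ 2],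
        ![-(1 + m) ^ 2 * l₁ ^ 3 + l₁ * Y, -(1 + m) ^ 2 * l₂ ^ 3 + l₂ * Y,
          -mu₁ ^ 3, -mu₂ ^ 3]]).det
    = -(l₂ - l₁) * (mu₂ - mu₁) * Ddet l₁ l₂ mu₁ mu₂ Y m :=
  det_Lambda_factorization_general ((1 + m) ^ 2) l₁ l₂ mu₁ mu₂ Y
end

section
/- For all complex numbers λ, μ, Y, m, the determinant of the 4×4 complex matrix Λ₂ with rows (1, 0, −1, 0), (λ, 1, −μ, −1), (−(1+m)²λ² + Y, −2(1+m)²λ, −μ², −2μ), (−(1+m)²λ³ + Yλ, −3(1+m)²λ² + Y, −μ³, −3μ²) equals ((1+m)²λ² + μ² − Y)² + 4·(1+m)²·λ·μ·(λ − μ)². (This is the determinant identity for the matrix Λ₂ computed in Section 2 of the paper, arising at the double-root value z = (Im ω₀)².) -/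
/-!
The matrix `Λ₂` matches the two solutions `e^{λt}`, `t e^{λt}` of a double root `λ` against those of
a double root `μ`. Its upper rows compare the values of `u` and `u'` at `0`, its lower rows those of
`p(d/dt) u` and `p(d/dt) u'`, where `p` is `-(1 + m)² X² + Y` on the `λ` side and `X²` on the `μ`
side. In the coordinates `u(0)`, `u'(0)`, the operator `p(d/dt)` acts on the solution space of a
double root `x` by `p(x) + p'(x) N`, where `N` is the nilpotent part of `d/dt`. Eliminating the
Cauchy data therefore reduces the determinant to that of the difference of two such `2 × 2`
matrices.
-/

open Matrix

section BlockElimination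

variable {m n R : Type*} [Fintype m] [Fintype n] [DecidableEq m] [DecidableEq n] [CommRing R]

theorem det_fromBlocks_mul_right (A : Matrix n m R) (B : Matrix n n R) (C : Matrix m n R)
    (S : Matrix m m R) (T : Matrix n n R) :
    (fromBlocks S (C * T) (A * S) (B * T)).det = (B - A * C).det * (S.det * T.det) := by
  have factorization : fromBlocks S (C * T) (A * S) (B * T) =
      fromBlocks 1 C A B * fromBlocks S 0 0 T := by
    simp [fromBlocks_multiply]
  rw [factorization, det_mul, det_fromBlocks_one₁₁, det_fromBlocks_zero₂₁]

end BlockElimination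

section DoubleRoot

variable {R : Type*} [CommRing R]

/-- The Cauchy data `(u(0), u'(0))` of the solutions `e^{xt}` and `t e^{xt}` attached to a double
characteristic root `x`, one solution per column. -/
def doubleRootCauchyData (x : R) : Matrix (Fin 2) (Fin 2) R :=
  !![1, 0; x, 1]

/-- The operator `p(d/dt)` on the span of `e^{xt}` and `t e^{xt}`, in the coordinates
`(u(0), u'(0))`. The scalars `q` and `q'` stand for `p(x)` and `p'(x)`; the matrix multiplied by
`q'` is `d/dt - x`, which squares to zero. -/
def doubleRootOperator (x q q' : R) : Matrix (Fin 2) (Fin 2) R :=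
  q • 1 + q' • !![-x, 1; -x ^ 2, x]

theorem det_doubleRootCauchyData (x : R) : (doubleRootCauchyData x).det = 1 := by
  simp [doubleRootCauchyData]

theorem doubleRootOperator_eq (x q q' : R) :
    doubleRootOperator x q q' = !![q - q' * x, q'; -(q' * x ^ 2), q + q' * x] := by
  simp [doubleRootOperator, one_fin_two, sub_eq_add_neg]

theorem doubleRootOperator_mul_doubleRootCauchyData (x q q' : R) :
    doubleRootOperator x q q' * doubleRootCauchyData x = !![q, q'; q * x, q + q' * x] := by
  have lower_left : -(q' * x ^ 2) + (q + q' * x) * x = q * x := by ring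
  simp [doubleRootOperator_eq, doubleRootCauchyData, lower_left]

theorem det_doubleRootOperator_sub (x y q q' r r' : R) :
    (doubleRootOperator x q q' - doubleRootOperator y r r').det =
      (q - r) ^ 2 - q' * r' * (x - y) ^ 2 := by
  simp only [doubleRootOperator_eq, det_fin_two, Matrix.sub_apply, of_apply, cons_val',
    cons_val_zero, cons_val_one, cons_val_fin_one]
  ring

theorem det_doubleRoot_matching (x y q q' r r' : R) :
    !![1, 0, -1, 0;
       x, 1, -y, -1;
       q, q', -r, -r';
       q * x, q + q' * x, -(r * y), -(r + r' * y)].det =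
      (q - r) ^ 2 - q' * r' * (x - y) ^ 2 := by
  let S := doubleRootCauchyData x
  let T := doubleRootCauchyData y
  let A := doubleRootOperator x q q'
  let B := doubleRootOperator y r r'
  have blocks : !![1, 0, -1, 0;
       x, 1, -y, -1;
       q, q', -r, -r';
       q * x, q + q' * x, -(r * y), -(r + r' * y)] =
      reindex finSumFinEquiv finSumFinEquiv (fromBlocks S (-1 * T) (A * S) (-B * T)) := by
    simp only [S, T, A, B, neg_mul, one_mul, doubleRootOperator_mul_doubleRootCauchyData]
    ext i j
    fin_cases i <;> fin_cases j <;> simp [doubleRootCauchyData, finSumFinEquiv, Fin.addCases]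
  calc
    _ = (fromBlocks S (-1 * T) (A * S) (-B * T)).det := by rw [blocks, det_reindex_self]
    _ = (-B - A * -1).det * (S.det * T.det) := det_fromBlocks_mul_right A (-B) (-1) S T
    _ = (A - B).det := by
      simp only [S, T, det_doubleRootCauchyData, mul_one, mul_neg, sub_neg_eq_add, neg_add_eq_sub]
    _ = _ := det_doubleRootOperator_sub x y q q' r r'

theorem det_Lambda2_identity_general (l mu Y a : R) :
    !![1, 0, -1, 0;
       l, 1, -mu, -1;
       -a * l ^ 2 + Y, -2 * a * l, -mu ^ 2, -2 * mu;
       -a * l ^ 3 + Y * l, -3 * a * l ^ 2 + Y, -mu ^ 3, -3 * mu ^ 2].det =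
      (a * l ^ 2 + mu ^ 2 - Y) ^ 2 + 4 * a * l * mu * (l - mu) ^ 2 := by
  have value_l : -a * l ^ 3 + Y * l = (-a * l ^ 2 + Y) * l := by ring
  have deriv_l : -3 * a * l ^ 2 + Y = -a * l ^ 2 + Y + -2 * a * l * l := by ring
  have value_mu : -mu ^ 3 = -(mu ^ 2 * mu) := by ring
  have deriv_mu : -3 * mu ^ 2 = -(mu ^ 2 + 2 * mu * mu) := by ring
  rw [value_l, deriv_l, value_mu, deriv_mu, neg_mul 2 mu, det_doubleRoot_matching]
  ring

end DoubleRoot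

/-- The determinant identity for the matrix `Λ₂` computed in Section 2 of the
paper, arising at the double-root value `z = (Im ω₀)²`. -/
theorem det_Lambda2_identity (l mu Y m : ℂ) :
    (Matrix.of
      ![![1, 0, -1, 0],
        ![l, 1, -mu, -1],
        ![-(1 + m) ^ 2 * l ^ 2 + Y, -2 * (1 + m) ^ 2 * l, -mu ^ 2, -2 * mu],
        ![-(1 + m) ^ 2 * l ^ 3 + Y * l, -3 * (1 + m) ^ 2 * l ^ 2 + Y,
          -mu ^ 3, -3 * mu ^ 2]]).det
    = ((1 + m) ^ 2 * l ^ 2 + mu ^ 2 - Y) ^ 2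
        + 4 * (1 + m) ^ 2 * l * mu * (l - mu) ^ 2 :=
  det_Lambda2_identity_general l mu Y ((1 + m) ^ 2)
end

section
/- Let λ₁, λ₂, μ₁, μ₂, Y, m be complex numbers with λ₁ ≠ 0, λ₂ ≠ 0, μ₁ ≠ 0, μ₂ ≠ 0, λ₁ ≠ λ₂, λ₁ ≠ −λ₂, μ₁ ≠ μ₂, μ₁ ≠ −μ₂. Define r₁ = (2λ₁(λ₁−λ₂)(λ₁+λ₂))⁻¹, r₂ = (2λ₂(λ₂−λ₁)(λ₂+λ₁))⁻¹, r₃ = (2μ₁(μ₁−μ₂)(μ₁+μ₂))⁻¹, r₄ = (2μ₂(μ₂−μ₁)(μ₂+μ₁))⁻¹. Let M be the product A·B of the 4×4 matrices A with rows (r₁, r₂, −r₃, −r₄), (λ₁r₁, λ₂r₂, −μ₁r₃, −μ₂r₄), ((−(1+m)²λ₁² + Y)r₁, (−(1+m)²λ₂² + Y)r₂, −μ₁²r₃, −μ₂²r₄), ((−(1+m)²λ₁³ + Yλ₁)r₁, (−(1+m)²λ₂³ + Yλ₂)r₂, −μ₁³r₃, −μ₂³r₄), and B with rows (1, λ₁²,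 0, 0), (1, λ₂², 0, 0), (0, 0, 1, μ₁²), (0, 0, 1, μ₂²). Then det M = −D(λ₁, λ₂, μ₁, μ₂, Y, m) / (16·λ₁·λ₂·μ₁·μ₂·(λ₁+λ₂)·(μ₁+μ₂)). (This is the formula det M = −det Λ₁ / (16 λ₁λ₂μ₁μ₂(λ₁+λ₂)(μ₁+μ₂)) for the principal symbol of the boundary system in Section 3 of the paper.) -/
open Matrix

section CommRing

variable {R : Type*} [CommRing R]

theorem det_fromBlocks_mul_mul {n : Type*} [Fintype n] [DecidableEq n] (X Z S T : Matrix n n R) :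
    (fromBlocks X Z (S * X) (T * Z)).det = (T - S).det * (X.det * Z.det) := by
  have factorization :
      fromBlocks X Z (S * X) (T * Z) = fromBlocks 1 1 S T * fromBlocks X 0 0 Z := by
    simp [fromBlocks_multiply]
  rw [factorization, det_mul, det_fromBlocks_one₁₁, det_fromBlocks_zero₂₁, Matrix.mul_one]

theorem det_eq_det_fromBlocks_castAdd_natAdd {p q : ℕ} (M : Matrix (Fin (p + q)) (Fin (p + q)) R) :
    M.det = (fromBlocks
      (M.submatrix (Fin.castAdd q) (Fin.castAdd q)) (M.submatrix (Fin.castAdd q) (Fin.natAdd p))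
      (M.submatrix (Fin.natAdd p) (Fin.castAdd q))
      (M.submatrix (Fin.natAdd p) (Fin.natAdd p))).det := by
  rw [← det_submatrix_equiv_self finSumFinEquiv, ← fromBlocks_toBlocks (M.submatrix _ _)]
  rfl

/-- The companion matrix of `(t - a) * (t - b)`, in the convention where the columns `(1, a)` and
`(1, b)` are eigenvectors. -/
def rootCompanion (a b : R) : Matrix (Fin 2) (Fin 2) R :=
  !![0, 1; -(a * b), a + b]

theorem rootCompanion_sq (a b : R) :
    rootCompanion a b ^ 2 =
      !![-(a * b), a + b; -(a * b * (a + b)), a ^ 2 + a * b + b ^ 2] := by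
  rw [rootCompanion, sq, mul_fin_two]
  ring_nf

/-- The `2 × 2` Vandermonde matrix with columns `(1, a)` and `(1, b)` scaled by `x` and `y`. -/
def weightedVandermonde (a b x y : R) : Matrix (Fin 2) (Fin 2) R :=
  !![x, y; a * x, b * y]

theorem semiconjBy_weightedVandermonde (a b x y : R) :
    SemiconjBy (weightedVandermonde a b x y) (diagonal ![a, b]) (rootCompanion a b) := by
  simp only [SemiconjBy, weightedVandermonde, rootCompanion, diagonal_fin_two, mul_fin_two,
    cons_val_zero, cons_val_one]
  ring_nf

theorem rootCompanion_sq_mul_weightedVandermonde (a b x y : R) :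
    rootCompanion a b ^ 2 * weightedVandermonde a b x y =
      !![a ^ 2 * x, b ^ 2 * y; a ^ 3 * x, b ^ 3 * y] := by
  rw [← ((semiconjBy_weightedVandermonde a b x y).pow_right 2).eq, diagonal_pow]
  simp only [weightedVandermonde, diagonal_fin_two, mul_fin_two, Pi.pow_apply, cons_val_zero,
    cons_val_one]
  ring_nf

/-- The difference of `t ^ 2` at the companion matrix of the `mu` roots and `Y - c * t ^ 2` at that
of the `l` roots. For `c = (1 + m) ^ 2` its determinant is `-det Λ₁`. -/
def boundaryPencil (l₁ l₂ mu₁ mu₂ c Y : R) : Matrix (Fin 2) (Fin 2) R :=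
  rootCompanion mu₁ mu₂ ^ 2 - (Y • 1 - c • rootCompanion l₁ l₂ ^ 2)

/-- The left factor `A` of the principal symbol `M`, with `c` in place of `(1 + m) ^ 2` and
arbitrary column weights in place of the `rⱼ`. -/
def boundaryMatrix (l₁ l₂ mu₁ mu₂ c Y x₁ x₂ x₃ x₄ : R) : Matrix (Fin 4) (Fin 4) R :=
  !![x₁, x₂, -x₃, -x₄;
    l₁ * x₁, l₂ * x₂, -mu₁ * x₃, -mu₂ * x₄;
    (-c * l₁ ^ 2 + Y) * x₁, (-c * l₂ ^ 2 + Y) * x₂, -mu₁ ^ 2 * x₃, -mu₂ ^ 2 * x₄;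
    (-c * l₁ ^ 3 + Y * l₁) * x₁, (-c * l₂ ^ 3 + Y * l₂) * x₂, -mu₁ ^ 3 * x₃, -mu₂ ^ 3 * x₄]

/-- The right factor `B` of the principal symbol `M`. -/
def evenMomentMatrix (l₁ l₂ mu₁ mu₂ : R) : Matrix (Fin 4) (Fin 4) R :=
  !![1, l₁ ^ 2, 0, 0;
    1, l₂ ^ 2, 0, 0;
    0, 0, 1, mu₁ ^ 2;
    0, 0, 1, mu₂ ^ 2]

theorem det_boundaryMatrix (l₁ l₂ mu₁ mu₂ c Y x₁ x₂ x₃ x₄ : R) :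
    (boundaryMatrix l₁ l₂ mu₁ mu₂ c Y x₁ x₂ x₃ x₄).det =
      (boundaryPencil l₁ l₂ mu₁ mu₂ c Y).det *
        ((weightedVandermonde l₁ l₂ x₁ x₂).det * (weightedVandermonde mu₁ mu₂ x₃ x₄).det) := by
  have det_neg_weights :
      (-weightedVandermonde mu₁ mu₂ x₃ x₄).det = (weightedVandermonde mu₁ mu₂ x₃ x₄).det := by
    simp [det_neg]
  have lower_left :
      (Y • 1 - c • rootCompanion l₁ l₂ ^ 2) * weightedVandermonde l₁ l₂ x₁ x₂ =
        !![(-c * l₁ ^ 2 + Y) * x₁, (-c * l₂ ^ 2 + Y) * x₂;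
          (-c * l₁ ^ 3 + Y * l₁) * x₁, (-c * l₂ ^ 3 + Y * l₂) * x₂] := by
    rw [sub_mul, smul_mul_assoc, smul_mul_assoc, one_mul,
      rootCompanion_sq_mul_weightedVandermonde, weightedVandermonde]
    simp only [smul_of, smul_cons, smul_empty, smul_eq_mul, of_sub_of, sub_cons, sub_self,
      head_cons, tail_cons, zero_empty]
    ring_nf
  rw [← det_neg_weights, boundaryPencil, ← det_fromBlocks_mul_mul, lower_left, mul_neg,
    rootCompanion_sq_mul_weightedVandermonde,
    det_eq_det_fromBlocks_castAdd_natAdd (p := 2) (q := 2)]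
  congr 2 <;> ext i j <;> fin_cases i <;> fin_cases j <;> first | rfl | exact neg_mul _ _

theorem det_evenMomentMatrix (l₁ l₂ mu₁ mu₂ : R) :
    (evenMomentMatrix l₁ l₂ mu₁ mu₂).det =
      !![1, l₁ ^ 2; 1, l₂ ^ 2].det * !![1, mu₁ ^ 2; 1, mu₂ ^ 2].det := by
  rw [← det_fromBlocks_zero₂₁ _ 0, det_eq_det_fromBlocks_castAdd_natAdd (p := 2) (q := 2)]
  congr 2 <;> ext i j <;> fin_cases i <;> fin_cases j <;> rfl

end CommRing

section Field

variable {K : Type*} [Field K]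

/-- The reciprocal of the derivative of `(t ^ 2 - a ^ 2) * (t ^ 2 - b ^ 2)` at its root `t = a`. -/
def rootWeight (a b : K) : K :=
  (2 * a * (a - b) * (a + b))⁻¹

theorem weightedVandermonde_rootWeight_mul [NeZero (2 : K)] {a b : K} (ha : a ≠ 0) (hb : b ≠ 0)
    (hab : a ≠ b) (hab' : a ≠ -b) :
    weightedVandermonde a b (rootWeight a b) (rootWeight b a) * !![1, a ^ 2; 1, b ^ 2] =
      !![-(2 * a * b * (a + b))⁻¹, (2 * (a + b))⁻¹; 0, 2⁻¹] := by
  have two_ne : (2 : K) ≠ 0 := NeZero.ne 2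
  have sub_ne : a - b ≠ 0 := sub_ne_zero.2 hab
  have add_ne : a + b ≠ 0 := fun h => hab' (eq_neg_of_add_eq_zero_left h)
  have rootWeight_swap : rootWeight b a = -(2 * b * (a - b) * (a + b))⁻¹ := by
    rw [rootWeight, ← inv_neg]
    ring
  rw [rootWeight_swap]
  simp only [weightedVandermonde, rootWeight, mul_fin_two, EmbeddingLike.apply_eq_iff_eq,
    vecCons_inj, and_true]
  refine ⟨⟨?_, ?_⟩, ?_, ?_⟩ <;> field_simp <;> ring

theorem det_weightedVandermonde_rootWeight_mul [NeZero (2 : K)] {a b : K} (ha : a ≠ 0) (hb : b ≠ 0)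
    (hab : a ≠ b) (hab' : a ≠ -b) :
    (weightedVandermonde a b (rootWeight a b) (rootWeight b a)).det * !![1, a ^ 2; 1, b ^ 2].det =
      -(4 * a * b * (a + b))⁻¹ := by
  rw [← det_mul, weightedVandermonde_rootWeight_mul ha hb hab hab', det_fin_two_of, mul_zero,
    sub_zero, neg_mul, ← mul_inv]
  ring

theorem det_M_formula_general [NeZero (2 : K)] (l₁ l₂ mu₁ mu₂ c Y : K)
    (hl₁ : l₁ ≠ 0) (hl₂ : l₂ ≠ 0) (hmu₁ : mu₁ ≠ 0) (hmu₂ : mu₂ ≠ 0)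
    (hl : l₁ ≠ l₂) (hl' : l₁ ≠ -l₂) (hmu : mu₁ ≠ mu₂) (hmu' : mu₁ ≠ -mu₂) :
    (boundaryMatrix l₁ l₂ mu₁ mu₂ c Y (rootWeight l₁ l₂) (rootWeight l₂ l₁)
        (rootWeight mu₁ mu₂) (rootWeight mu₂ mu₁) * evenMomentMatrix l₁ l₂ mu₁ mu₂).det =
      (boundaryPencil l₁ l₂ mu₁ mu₂ c Y).det /
        (16 * l₁ * l₂ * mu₁ * mu₂ * (l₁ + l₂) * (mu₁ + mu₂)) := by
  rw [det_mul, det_boundaryMatrix, det_evenMomentMatrix, mul_assoc, mul_mul_mul_comm,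
    det_weightedVandermonde_rootWeight_mul hl₁ hl₂ hl hl',
    det_weightedVandermonde_rootWeight_mul hmu₁ hmu₂ hmu hmu', neg_mul_neg, ← mul_inv,
    div_eq_mul_inv]
  ring

end Field

theorem det_boundaryPencil (l₁ l₂ mu₁ mu₂ Y m : ℂ) :
    (boundaryPencil l₁ l₂ mu₁ mu₂ ((1 + m) ^ 2) Y).det = -Ddet l₁ l₂ mu₁ mu₂ Y m := by
  simp only [boundaryPencil, rootCompanion_sq, Ddet, one_fin_two, det_fin_two, Matrix.sub_apply,
    Matrix.smul_apply, smul_eq_mul, of_apply, cons_val', cons_val_fin_one, cons_val_zero,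
    cons_val_one]
  ring

/-- The formula `det M = −det Λ₁ / (16 λ₁λ₂μ₁μ₂(λ₁+λ₂)(μ₁+μ₂))` for the
principal symbol of the boundary system in Section 3 of the paper. -/
theorem det_M_formula
    (l₁ l₂ mu₁ mu₂ Y m : ℂ)
    (hl₁ : l₁ ≠ 0) (hl₂ : l₂ ≠ 0) (hmu₁ : mu₁ ≠ 0) (hmu₂ : mu₂ ≠ 0)
    (hl : l₁ ≠ l₂) (hl' : l₁ ≠ -l₂) (hmu : mu₁ ≠ mu₂) (hmu' : mu₁ ≠ -mu₂) :
    (let r₁ : ℂ := (2 * l₁ * (l₁ - l₂) * (l₁ + l₂))⁻¹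
     let r₂ : ℂ := (2 * l₂ * (l₂ - l₁) * (l₂ + l₁))⁻¹
     let r₃ : ℂ := (2 * mu₁ * (mu₁ - mu₂) * (mu₁ + mu₂))⁻¹
     let r₄ : ℂ := (2 * mu₂ * (mu₂ - mu₁) * (mu₂ + mu₁))⁻¹
     let A : Matrix (Fin 4) (Fin 4) ℂ := Matrix.of
       ![![r₁, r₂, -r₃, -r₄],
         ![l₁ * r₁, l₂ * r₂, -mu₁ * r₃, -mu₂ * r₄],
         ![(-(1 + m) ^ 2 * l₁ ^ 2 + Y) * r₁, (-(1 + m) ^ 2 * l₂ ^ 2 + Y) * r₂,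
           -mu₁ ^ 2 * r₃, -mu₂ ^ 2 * r₄],
         ![(-(1 + m) ^ 2 * l₁ ^ 3 + Y * l₁) * r₁,
           (-(1 + m) ^ 2 * l₂ ^ 3 + Y * l₂) * r₂,
           -mu₁ ^ 3 * r₃, -mu₂ ^ 3 * r₄]]
     let B : Matrix (Fin 4) (Fin 4) ℂ := Matrix.of
       ![![1, l₁ ^ 2, 0, 0],
         ![1, l₂ ^ 2, 0, 0],
         ![0, 0, 1, mu₁ ^ 2],
         ![0, 0, 1, mu₂ ^ 2]]
     (A * B).det)
    = -Ddet l₁ l₂ mu₁ mu₂ Y m /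
        (16 * l₁ * l₂ * mu₁ * mu₂ * (l₁ + l₂) * (mu₁ + mu₂)) := by
  rw [← det_boundaryPencil]
  exact det_M_formula_general l₁ l₂ mu₁ mu₂ ((1 + m) ^ 2) Y hl₁ hl₂ hmu₁ hmu₂ hl hl' hmu hmu'
end
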